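/- Let $R$ be a local ring with maximal ideal $\mathfrak{m}$, $J$ an ideal of $R$, $A$ an $R$-algebra which is flat as an $R$-module, and $\Phi : A^p \to A^q$ an $A$-linear map with cokernel $F$. Define $\ker_J\Phi = \{\zeta \in A^p : \Phi(\zeta) \in J\cdot A^q\}$. Then $F \otimes_R R/J$ is flat over $R/J$ if and only if the image of $\ker_J\Phi$ in $(A/\mathfrak{m}A)^p$ equals the kernel of the induced map $\Phi_\mathfrak{m} : (A/\mathfrak{m}A)^p \to (A/\mathfrak{m}A)^q$, assuming flatness of $F\otimes_R R/J$ over $R/J$ is equivalent to vanishing of $\mathrm{Tor}_1^{R/J}(F\otimes_R R/J, R/\mathfrak{m})$ (e.g., when $R/J$ is Noetherian local and $F\otimes_R R/J$ is a finitely generated module over a Noetherian local $R/J$-algebra). -/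

import Mathlib

open Matrix IsLocalRing TensorProduct

/-
For an `R`-flat module `P` and `J ≤ I`, the group `Tor₁^{R/J}(P/(N + JP), R/I)` is the quotient
`(N + JP) ∩ IP / (IN + JP)`, so it vanishes iff `N ∩ IP ≤ IN + JP`. The equational criterion shows
that `P/(N + JP)` is flat over `R/J` iff this holds for all `I`. Dévissage along
`0 → R/(I : x) → R/I → R/(I + (x)) → 0` carries the condition from the maximal ideal `𝔪` to every
`I ⊇ J` containing a power of `𝔪`, and Krull's intersection theorem, applied to `I + J + 𝔪^c` for
all `c`, removes the last restriction. For `N` the range of `φ`, the condition at `𝔪` says that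
every `ζ` with `φ ζ ∈ 𝔪P` agrees modulo `𝔪` with some `ξ` such that `φ ξ ∈ JP`.
-/

section Relations

variable {R P : Type*} [CommRing R] [AddCommGroup P] [Module R P]

theorem exists_sum_smul_eq_of_mem_span_range_smul {ι : Type*} [Fintype ι] {r : ι → R}
    {N : Submodule R P} {x : P} (hx : x ∈ Ideal.span (Set.range r) • N) :
    ∃ y : ι → P, (∀ i, y i ∈ N) ∧ ∑ i, r i • y i = x := by
  refine Submodule.smul_induction_on hx (fun s hs n hn ↦ ?_) fun u v hu hv ↦ ?_
  · obtain ⟨c, rfl⟩ := Ideal.mem_span_range_iff_exists_fun.1 hs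
    exact ⟨fun i ↦ c i • n, fun i ↦ N.smul_mem _ hn, by
      simp only [Finset.sum_smul, smul_smul, mul_comm]⟩
  · obtain ⟨a, ha, rfl⟩ := hu
    obtain ⟨b, hb, rfl⟩ := hv
    exact ⟨a + b, fun i ↦ N.add_mem (ha i) (hb i), by
      simp only [Pi.add_apply, smul_add, Finset.sum_add_distrib]⟩

theorem exists_fin_sum_smul_eq_of_mem_smul_top {I : Ideal R} {x : P}
    (hx : x ∈ I • (⊤ : Submodule R P)) :
    ∃ (n : ℕ) (r : Fin n → R) (y : Fin n → P), (∀ i, r i ∈ I) ∧ ∑ i, r i • y i = x := by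
  refine Submodule.smul_induction_on hx (fun s hs v _ ↦ ?_) fun u v hu hv ↦ ?_
  · exact ⟨1, fun _ ↦ s, fun _ ↦ v, fun _ ↦ hs, by simp⟩
  · obtain ⟨m, r, y, hr, rfl⟩ := hu
    obtain ⟨n, s, z, hs, rfl⟩ := hv
    exact ⟨m + n, Fin.append r s, Fin.append y z,
      Fin.addCases (by simpa using hr) (by simpa using hs), by simp [Fin.sum_univ_add]⟩

theorem exists_factorization_of_sum_smul_mem_smul_top [Module.Flat R P] {ι : Type*} [Fintype ι]
    {I : Ideal R} {r : ι → R} {p : ι → P} (h : ∑ i, r i • p i ∈ I • (⊤ : Submodule R P)) :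
    ∃ (k : ℕ) (a : ι → Fin k → R) (z : Fin k → P),
      (∀ i, p i = ∑ j, a i j • z j) ∧ ∀ j, ∑ i, r i * a i j ∈ I := by
  obtain ⟨n, c, w, hc, hw⟩ := exists_fin_sum_smul_eq_of_mem_smul_top h
  have hrel : ∑ i, Sum.elim r (-c) i • Sum.elim p w i = 0 := by
    simp [hw]
  obtain ⟨k, a, z, hz, ha⟩ := Module.Flat.isTrivialRelation_of_sum_smul_eq_zero hrel
  refine ⟨k, fun i ↦ a (.inl i), z, fun i ↦ hz (.inl i), fun j ↦ ?_⟩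
  have hj : ∑ i, r i * a (.inl i) j = ∑ i, c i * a (.inr i) j := by
    simpa [add_neg_eq_zero] using ha j
  exact hj ▸ I.sum_mem fun i _ ↦ I.mul_mem_right _ (hc i)

theorem mem_colon_smul_top_of_smul_mem_smul_top [Module.Flat R P] {I : Ideal R} {x : R} {v : P}
    (hv : x • v ∈ I • (⊤ : Submodule R P)) : v ∈ I.colon {x} • (⊤ : Submodule R P) := by
  obtain ⟨k, a, z, hz, ha⟩ := exists_factorization_of_sum_smul_mem_smul_top
    (ι := Unit) (r := fun _ ↦ x) (p := fun _ ↦ v) (by simpa using hv)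
  rw [hz ()]
  refine Submodule.sum_mem _ fun j _ ↦ Submodule.smul_mem_smul ?_ trivial
  simpa [Submodule.mem_colon_singleton, mul_comm] using ha j

variable {J : Ideal R} {M : Type*} [AddCommGroup M] [Module R M] [Module (R ⧸ J) M]
  [IsScalarTower R (R ⧸ J) M] {g : P →ₗ[R] M} {ι : Type*} [Fintype ι] {r : ι → R} {p : ι → P}

theorem sum_smul_mem_of_isTrivialRelation (hg : Function.Surjective g)
    (h : Module.IsTrivialRelation (fun i ↦ Ideal.Quotient.mk J (r i)) (fun i ↦ g (p i))) :
    ∑ i, r i • p i ∈ Ideal.span (Set.range r) • LinearMap.ker g ⊔ J • (⊤ : Submodule R P) := by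
  obtain ⟨k, a, y, hy, ha⟩ := h
  choose b hb using fun i j ↦ Ideal.Quotient.mk_surjective (a i j)
  choose z hz using fun j ↦ hg (y j)
  have hdecomp : ∑ i, r i • p i =
      ∑ i, r i • (p i - ∑ j, b i j • z j) + ∑ j, (∑ i, r i * b i j) • z j := by
    simp only [smul_sub, Finset.sum_sub_distrib, Finset.smul_sum, Finset.sum_smul, smul_smul]
    rw [Finset.sum_comm (s := (Finset.univ : Finset (Fin k))), sub_add_cancel]
  have hker (i : ι) : p i - ∑ j, b i j • z j ∈ LinearMap.ker g := by
    have hgb (j : Fin k) : g (b i j • z j) = a i j • y j := by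
      rw [map_smul, hz, ← hb]
      exact (algebraMap_smul (R ⧸ J) (b i j) (y j)).symm
    simp [LinearMap.mem_ker, hgb, hy, -map_smul]
  have hJ (j : Fin k) : ∑ i, r i * b i j ∈ J := by
    simpa [← Ideal.Quotient.eq_zero_iff_mem, hb] using ha j
  rw [hdecomp]
  exact Submodule.add_mem_sup
    (Submodule.sum_mem _ fun i _ ↦
      Submodule.smul_mem_smul (Ideal.subset_span (Set.mem_range_self i)) (hker i))
    (Submodule.sum_mem _ fun j _ ↦ Submodule.smul_mem_smul (hJ j) trivial)

theorem isTrivialRelation_of_sum_smul_mem [Module.Flat R P]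
    (h : ∑ i, r i • p i ∈
      Ideal.span (Set.range r) • LinearMap.ker g ⊔ J • (⊤ : Submodule R P)) :
    Module.IsTrivialRelation (fun i ↦ Ideal.Quotient.mk J (r i)) (fun i ↦ g (p i)) := by
  obtain ⟨s, hs, t, ht, hst⟩ := Submodule.mem_sup.1 h
  obtain ⟨y, hy, rfl⟩ := exists_sum_smul_eq_of_mem_span_range_smul hs
  have hmem : ∑ i, r i • (p i - y i) ∈ J • (⊤ : Submodule R P) := by
    simpa [smul_sub, ← hst] using ht
  obtain ⟨k, a, z, hz, ha⟩ := exists_factorization_of_sum_smul_mem_smul_top hmem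
  refine ⟨k, fun i j ↦ Ideal.Quotient.mk J (a i j), fun j ↦ g (z j), fun i ↦ ?_, fun j ↦ ?_⟩
  · calc g (p i) = g (p i - y i) := by rw [map_sub, LinearMap.mem_ker.1 (hy i), sub_zero]
      _ = ∑ j, a i j • g (z j) := by simp only [hz, map_sum, map_smul]
      _ = ∑ j, Ideal.Quotient.mk J (a i j) • g (z j) :=
        Finset.sum_congr rfl fun j _ ↦ (algebraMap_smul (R ⧸ J) (a i j) (g (z j))).symm
  · simpa only [map_sum, map_mul] using Ideal.Quotient.eq_zero_iff_mem.2 (ha j)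

end Relations

section TorOneVanishes

variable {R P : Type*} [CommRing R] [AddCommGroup P] [Module R P]

/-- The vanishing of `Tor₁^{R/J}(P/(N + JP), R/I)` for `J ≤ I` and `P` flat over `R`, expressed
inside `P`. It is the input and the output of the dévissage in the local criterion of flatness. -/
def TorOneVanishes (J : Ideal R) (N : Submodule R P) (I : Ideal R) : Prop :=
  N ⊓ I • ⊤ ≤ I • N ⊔ J • ⊤

theorem flat_quotient_iff_forall_torOneVanishes [Module.Flat R P] {J : Ideal R} {M : Type*}
    [AddCommGroup M] [Module R M] [Module (R ⧸ J) M] [IsScalarTower R (R ⧸ J) M]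
    {g : P →ₗ[R] M} (hg : Function.Surjective g) :
    Module.Flat (R ⧸ J) M ↔ ∀ I : Ideal R, TorOneVanishes J (LinearMap.ker g) I := by
  have hmap {n : ℕ} (r : Fin n → R) (p : Fin n → P) :
      ∑ i, Ideal.Quotient.mk J (r i) • g (p i) = g (∑ i, r i • p i) := by
    simp only [map_sum, map_smul]
    exact Finset.sum_congr rfl fun i _ ↦ algebraMap_smul (R ⧸ J) (r i) (g (p i))
  refine ⟨fun _ I ↦ ?_, fun h ↦ Module.Flat.of_forall_isTrivialRelation fun {n f x} hfx ↦ ?_⟩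
  · rintro v ⟨hv, hvI⟩
    obtain ⟨n, r, p, hr, rfl⟩ := exists_fin_sum_smul_eq_of_mem_smul_top hvI
    have hspan : Ideal.span (Set.range r) ≤ I := Ideal.span_le.2 (Set.range_subset_iff.2 hr)
    have htriv := Module.Flat.isTrivialRelation_of_sum_smul_eq_zero ((hmap r p).trans hv)
    exact SetLike.le_def.1 (sup_le_sup_right (Submodule.smul_mono_left hspan) _)
      (sum_smul_mem_of_isTrivialRelation hg htriv)
  · obtain ⟨r, rfl⟩ := Ideal.Quotient.mk_surjective.comp_left f
    obtain ⟨p, rfl⟩ := hg.comp_left x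
    refine isTrivialRelation_of_sum_smul_mem (h (Ideal.span (Set.range r)) ⟨?_, ?_⟩)
    · exact (hmap r p).symm.trans hfx
    · exact Submodule.sum_mem _ fun i _ ↦
        Submodule.smul_mem_smul (Ideal.subset_span (Set.mem_range_self i)) trivial

namespace TorOneVanishes

variable {I J : Ideal R} {N : Submodule R P}

theorem of_sup (h : TorOneVanishes J N (I ⊔ J)) : TorOneVanishes J N I :=
  calc N ⊓ I • ⊤ ≤ N ⊓ (I ⊔ J) • ⊤ := inf_le_inf_left _ (Submodule.smul_mono_left le_sup_left)
    _ ≤ (I ⊔ J) • N ⊔ J • ⊤ := h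
    _ ≤ I • N ⊔ J • ⊤ := by
      rw [Submodule.sup_smul]
      exact sup_le (sup_le_sup_left (Submodule.smul_mono le_rfl le_top) _) le_sup_right

theorem sup_smul_top_iff (hJI : J ≤ I) :
    TorOneVanishes J (N ⊔ J • ⊤) I ↔ TorOneVanishes J N I := by
  have hmod : (N ⊔ J • ⊤) ⊓ I • ⊤ = J • ⊤ ⊔ N ⊓ I • ⊤ := by
    rw [sup_comm, sup_inf_assoc_of_le _ (Submodule.smul_mono_left hJI)]
  have hsmul : I • (N ⊔ J • ⊤) ⊔ J • ⊤ = I • N ⊔ J • (⊤ : Submodule R P) := by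
    rw [Submodule.smul_sup, sup_assoc,
      sup_eq_right.2 (Submodule.smul_le_right : I • J • (⊤ : Submodule R P) ≤ J • ⊤)]
  rw [TorOneVanishes, hmod, hsmul, sup_le_iff]
  exact and_iff_right le_sup_right

theorem restrictScalars_iff {A : Type*} [CommRing A] [Algebra R A] [Module A P]
    [IsScalarTower R A P] {N : Submodule A P} :
    TorOneVanishes J (N.restrictScalars R) I ↔
      TorOneVanishes (J.map (algebraMap R A)) N (I.map (algebraMap R A)) := by
  simp only [TorOneVanishes, ← Submodule.restrictScalars_top R A P, ← Ideal.smul_restrictScalars,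
    ← Submodule.restrictScalars_inf, ← Submodule.restrictScalars_sup, Submodule.restrictScalars_le]

-- The half-exactness of `Tor₁` at `0 → R/(I : x) → R/I → R/(I + (x)) → 0`.
open scoped Pointwise in
theorem of_colon_of_sup_span [Module.Flat R P] {x : R} (hJI : J ≤ I)
    (hcolon : TorOneVanishes J N (I.colon {x}))
    (hsup : TorOneVanishes J N (I ⊔ Ideal.span {x})) : TorOneVanishes J N I := by
  rintro v ⟨hvN, hvI⟩
  have hv : v ∈ (I • N ⊔ J • ⊤) ⊔ x • N := by
    have := hsup ⟨hvN, Submodule.smul_mono_left le_sup_left hvI⟩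
    rwa [Submodule.sup_smul, sup_right_comm, Submodule.ideal_span_singleton_smul] at this
  obtain ⟨s, hs, _, ⟨n, hn, rfl⟩, rfl⟩ := Submodule.mem_sup.1 hv
  refine Submodule.add_mem _ hs ?_
  have hsI : s ∈ I • (⊤ : Submodule R P) :=
    (sup_le (Submodule.smul_mono le_rfl le_top) (Submodule.smul_mono_left hJI) :
      I • N ⊔ J • ⊤ ≤ I • (⊤ : Submodule R P)) hs
  have hnI : n ∈ I.colon {x} • (⊤ : Submodule R P) :=
    mem_colon_smul_top_of_smul_mem_smul_top ((Submodule.add_mem_iff_right _ hsI).1 hvI)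
  have hcolonN : x • (I.colon {x} • N) ≤ I • N := by
    rw [← Submodule.ideal_span_singleton_smul, ← mul_smul]
    refine Submodule.smul_mono_left (Ideal.span_singleton_mul_le_iff.2 fun a ha ↦ ?_)
    simpa [Submodule.mem_colon_singleton, mul_comm] using ha
  have hJx : x • (J • (⊤ : Submodule R P)) ≤ J • ⊤ := Submodule.smul_le_self_of_tower x _
  have hxn : x • n ∈ x • (I.colon {x} • N ⊔ J • ⊤) :=
    Submodule.smul_mem_pointwise_smul n x _ (hcolon ⟨hn, hnI⟩)
  rw [Submodule.smul_sup'] at hxn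
  exact sup_le_sup hcolonN hJx hxn

end TorOneVanishes

theorem exists_notMem_le_colon_of_pow_le {𝔞 I : Ideal R} (hI : I ≠ ⊤) {c : ℕ}
    (h : 𝔞 ^ c ≤ I) : ∃ x ∉ I, 𝔞 ≤ I.colon {x} := by
  induction c with
  | zero => exact absurd (top_le_iff.1 (by simpa using h)) hI
  | succ c ih =>
    by_cases hc : 𝔞 ^ c ≤ I
    · exact ih hc
    · obtain ⟨x, hx, hxI⟩ := SetLike.not_le_iff_exists.1 hc
      refine ⟨x, hxI, fun a ha ↦ Submodule.mem_colon_singleton.2 (h ?_)⟩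
      exact pow_succ' 𝔞 c ▸ Ideal.mul_mem_mul ha hx

theorem TorOneVanishes.of_pow_le [IsNoetherianRing R] [Module.Flat R P] {I J 𝔪 : Ideal R}
    [𝔪.IsMaximal] {N : Submodule R P} (h𝔪 : TorOneVanishes J N 𝔪) (hJI : J ≤ I) {c : ℕ}
    (hI : 𝔪 ^ c ≤ I) : TorOneVanishes J N I := by
  induction I using WellFoundedGT.induction with
  | ind I ih =>
  obtain rfl | htop := eq_or_ne I ⊤
  · exact inf_le_left.trans (by simp)
  obtain ⟨x, hxI, hx⟩ := exists_notMem_le_colon_of_pow_le htop hI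
  have hcolon : I.colon {x} = 𝔪 :=
    (Ideal.IsMaximal.eq_of_le ‹_› (by simpa [Ideal.ne_top_iff_one] using hxI) hx).symm
  have hlt : I < I ⊔ Ideal.span {x} := by simpa using hxI
  exact .of_colon_of_sup_span hJI (hcolon ▸ h𝔪) (ih _ hlt (hJI.trans hlt.le) (hI.trans hlt.le))

end TorOneVanishes

section LocalCriterion

variable {R A P : Type*} [CommRing R] [CommRing A] [IsNoetherianRing A] [Algebra R A]
  [AddCommGroup P] [Module A P] [Module.Finite A P]

theorem mem_of_forall_mem_sup_pow_smul_top {𝔞 : Ideal A} (h𝔞 : 𝔞 ≤ Ideal.jacobson ⊥)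
    {K : Submodule A P} {y : P} (hy : ∀ c : ℕ, y ∈ K ⊔ 𝔞 ^ c • ⊤) : y ∈ K := by
  rw [← Submodule.Quotient.mk_eq_zero, ← Submodule.mem_bot A,
    ← Ideal.iInf_pow_smul_eq_bot_of_le_jacobson (M := P ⧸ K) 𝔞 h𝔞, Submodule.mem_iInf]
  intro c
  have := Submodule.mem_map_of_mem (f := K.mkQ) (hy c)
  simpa [Submodule.map_sup, Submodule.map_smul''] using this

variable [IsNoetherianRing R] [Module R P] [IsScalarTower R A P] [Module.Flat R P]
  {J 𝔪 : Ideal R} [𝔪.IsMaximal] {N : Submodule A P}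

theorem TorOneVanishes.of_isMaximal (h𝔪A : 𝔪.map (algebraMap R A) ≤ Ideal.jacobson ⊥)
    (h𝔪 : TorOneVanishes J (N.restrictScalars R) 𝔪) (I : Ideal R) :
    TorOneVanishes J (N.restrictScalars R) I := by
  refine .of_sup (TorOneVanishes.restrictScalars_iff.2 ?_)
  set I' := I ⊔ J
  rintro y ⟨hyN, hyI⟩
  refine mem_of_forall_mem_sup_pow_smul_top h𝔪A fun c ↦ ?_
  have hc : TorOneVanishes (J.map (algebraMap R A)) N ((I' ⊔ 𝔪 ^ c).map (algebraMap R A)) :=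
    TorOneVanishes.restrictScalars_iff.1
      (h𝔪.of_pow_le (le_sup_right.trans le_sup_left) le_sup_right)
  have hy := hc ⟨hyN, Submodule.smul_mono_left (Ideal.map_mono le_sup_left) hyI⟩
  rw [Ideal.map_sup, Ideal.map_pow, Submodule.sup_smul, sup_right_comm] at hy
  exact SetLike.le_def.1 (sup_le_sup_left (Submodule.smul_mono le_rfl le_top) _) hy

theorem flat_quotient_iff_torOneVanishes (h𝔪A : 𝔪.map (algebraMap R A) ≤ Ideal.jacobson ⊥)
    {M : Type*} [AddCommGroup M] [Module R M] [Module (R ⧸ J) M] [IsScalarTower R (R ⧸ J) M]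
    {g : P →ₗ[R] M} (hg : Function.Surjective g) (hN : LinearMap.ker g = N.restrictScalars R) :
    Module.Flat (R ⧸ J) M ↔ TorOneVanishes J (N.restrictScalars R) 𝔪 := by
  rw [flat_quotient_iff_forall_torOneVanishes hg, hN]
  exact ⟨fun h ↦ h 𝔪, .of_isMaximal h𝔪A⟩

end LocalCriterion

section Cokernel

variable {A L P : Type*} [CommRing A] [AddCommGroup L] [Module A L] [AddCommGroup P] [Module A P]

/-- The submodule `ker_J φ = φ⁻¹(J • P)` of elements killed by `φ` modulo the ideal `J`. -/
def kerMod (J : Ideal A) (φ : L →ₗ[A] P) : Submodule A L :=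
  (J • ⊤ : Submodule A P).comap φ

theorem torOneVanishes_range_iff {I J : Ideal A} (hJI : J ≤ I) (φ : L →ₗ[A] P) :
    TorOneVanishes J (LinearMap.range φ) I ↔ kerMod J φ ⊔ I • ⊤ = kerMod I φ := by
  have hsmul : I • LinearMap.range φ = (I • ⊤ : Submodule A L).map φ := by
    rw [Submodule.map_smul'', Submodule.map_top]
  have hle : kerMod J φ ⊔ I • ⊤ ≤ kerMod I φ :=
    sup_le (Submodule.comap_mono (Submodule.smul_mono_left hJI))
      (Submodule.map_le_iff_le_comap.1
        (hsmul ▸ Submodule.smul_mono le_rfl le_top))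
  rw [TorOneVanishes, hsmul]
  refine ⟨fun h ↦ hle.antisymm fun ζ hζ ↦ ?_, fun h ↦ ?_⟩
  · obtain ⟨_, ⟨ξ, hξ, rfl⟩, w, hw, hsum⟩ := Submodule.mem_sup.1 (h ⟨⟨ζ, rfl⟩, hζ⟩)
    have hdiff : ζ - ξ ∈ kerMod J φ := by
      rwa [kerMod, Submodule.mem_comap, map_sub, ← hsum, add_sub_cancel_left]
    exact sub_add_cancel ζ ξ ▸ Submodule.add_mem_sup hdiff hξ
  · rintro _ ⟨⟨ζ, rfl⟩, hζ⟩
    obtain ⟨ξ, hξ, η, hη, rfl⟩ := Submodule.mem_sup.1 (h.ge hζ)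
    rw [map_add, add_comm]
    exact Submodule.add_mem_sup (Submodule.mem_map_of_mem hη) hξ

theorem ker_mk_one_comp_mkQ {R : Type*} [CommRing R] [Algebra R A] [Module R P]
    [IsScalarTower R A P] (J : Ideal R) (N : Submodule A P) :
    LinearMap.ker (TensorProduct.mk R (R ⧸ J) (P ⧸ N) 1 ∘ₗ N.mkQ.restrictScalars R) =
      (N ⊔ J.map (algebraMap R A) • ⊤).restrictScalars R := by
  have htop : J • (⊤ : Submodule R (P ⧸ N)) =
      (J • (⊤ : Submodule R P)).map (N.mkQ.restrictScalars R) := by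
    rw [Submodule.map_smul'', Submodule.map_top,
      (LinearMap.range_eq_top (f := N.mkQ.restrictScalars R)).2 N.mkQ_surjective]
  rw [LinearMap.ker_comp, LinearMap.ker_tensorProductMk, htop, Submodule.comap_map_eq,
    LinearMap.ker_restrictScalars, Submodule.ker_mkQ, Submodule.restrictScalars_sup,
    Ideal.smul_restrictScalars, Submodule.restrictScalars_top, sup_comm]

theorem flat_quotient_tensor_coker_iff {R : Type*} [CommRing R] [IsNoetherianRing R]
    [IsNoetherianRing A] [Algebra R A] [Module R P] [IsScalarTower R A P] [Module.Finite A P]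
    [Module.Flat R P] {J 𝔪 : Ideal R} [𝔪.IsMaximal] (hJ : J ≤ 𝔪)
    (h𝔪A : 𝔪.map (algebraMap R A) ≤ Ideal.jacobson ⊥) (φ : L →ₗ[A] P) :
    Module.Flat (R ⧸ J) ((R ⧸ J) ⊗[R] (P ⧸ LinearMap.range φ)) ↔
      kerMod (J.map (algebraMap R A)) φ ⊔ 𝔪.map (algebraMap R A) • ⊤ =
        kerMod (𝔪.map (algebraMap R A)) φ := by
  let g := TensorProduct.mk R (R ⧸ J) (P ⧸ LinearMap.range φ) 1 ∘ₗ
    (LinearMap.range φ).mkQ.restrictScalars R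
  have hg : Function.Surjective g :=
    (TensorProduct.mk_surjective R _ _ Ideal.Quotient.mk_surjective).comp
      (LinearMap.range φ).mkQ_surjective
  rw [flat_quotient_iff_torOneVanishes h𝔪A hg (ker_mk_one_comp_mkQ J (LinearMap.range φ)),
    TorOneVanishes.restrictScalars_iff, TorOneVanishes.sup_smul_top_iff (Ideal.map_mono hJ),
    torOneVanishes_range_iff (Ideal.map_mono hJ)]

end Cokernel

section Matrix

variable {A ι κ : Type*} [CommRing A]

theorem mem_smul_top_pi_iff [Finite ι] {I : Ideal A} {v : ι → A} :
    v ∈ I • (⊤ : Submodule A (ι → A)) ↔ ∀ i, v i ∈ I := by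
  classical
  have := Fintype.ofFinite ι
  refine ⟨fun hv i ↦ ?_, fun hv ↦ ?_⟩
  · exact Submodule.smul_induction_on hv (fun a ha w _ ↦ I.mul_mem_right (w i) ha)
      fun _ _ ↦ I.add_mem
  · rw [pi_eq_sum_univ v]
    exact Submodule.sum_mem _ fun i _ ↦ Submodule.smul_mem_smul (hv i) trivial

variable [Finite ι] [Fintype κ]

theorem mem_kerMod_mulVecLin_iff {I : Ideal A} {Φ : Matrix ι κ A} {ζ : κ → A} :
    ζ ∈ kerMod I Φ.mulVecLin ↔ ∀ i, (Φ *ᵥ ζ) i ∈ I :=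
  mem_smul_top_pi_iff

theorem mem_kerMod_mulVecLin_iff_map_mulVec_eq_zero {I : Ideal A} {Φ : Matrix ι κ A} {ζ : κ → A} :
    ζ ∈ kerMod I Φ.mulVecLin ↔
      Φ.map (Ideal.Quotient.mk I) *ᵥ (fun j ↦ Ideal.Quotient.mk I (ζ j)) = 0 := by
  rw [mem_kerMod_mulVecLin_iff, funext_iff]
  refine forall_congr' fun i ↦ ?_
  rw [← Ideal.Quotient.eq_zero_iff_mem, RingHom.map_mulVec]
  rfl

theorem image_ker_eq_ker_map_iff (I J : Ideal A) (Φ : Matrix ι κ A) :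
    {ζbar : κ → A ⧸ I | ∃ ζ : κ → A, (∀ i, (Φ *ᵥ ζ) i ∈ J) ∧
        (fun j ↦ Ideal.Quotient.mk I (ζ j)) = ζbar} =
      {ζbar | Φ.map (Ideal.Quotient.mk I) *ᵥ ζbar = 0} ↔
    kerMod J Φ.mulVecLin ⊔ I • ⊤ = kerMod I Φ.mulVecLin := by
  let ev : (κ → A) →ₗ[A] (κ → A ⧸ I) := I.mkQ.compLeft κ
  have hev : Function.Surjective ev := I.mkQ_surjective.comp_left
  have hker : LinearMap.ker ev = I • ⊤ := by
    refine Submodule.ext fun ζ ↦ Iff.trans ?_ mem_smul_top_pi_iff.symm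
    simp [ev, funext_iff, Ideal.Quotient.eq_zero_iff_mem]
  have hpre : ev ⁻¹' {ζbar | Φ.map (Ideal.Quotient.mk I) *ᵥ ζbar = 0} =
      kerMod I Φ.mulVecLin :=
    Set.ext fun _ ↦ mem_kerMod_mulVecLin_iff_map_mulVec_eq_zero.symm
  have himage : {ζbar : κ → A ⧸ I | ∃ ζ : κ → A, (∀ i, (Φ *ᵥ ζ) i ∈ J) ∧
      (fun j ↦ Ideal.Quotient.mk I (ζ j)) = ζbar} = (kerMod J Φ.mulVecLin).map ev :=
    Set.ext fun _ ↦ exists_congr fun _ ↦ and_congr_left' mem_kerMod_mulVecLin_iff.symm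
  rw [← hev.preimage_injective.eq_iff, himage, hpre, ← Submodule.comap_coe, SetLike.coe_set_eq,
    Submodule.comap_map_eq, hker]

end Matrix

theorem stmt3_general {R A ι κ : Type*} [CommRing R] [IsNoetherianRing R] (J 𝔪 : Ideal R)
    [𝔪.IsMaximal] (hJ : J ≤ 𝔪) [CommRing A] [IsNoetherianRing A] [Algebra R A]
    [Module.Flat R A] (h𝔪A : 𝔪.map (algebraMap R A) ≤ Ideal.jacobson ⊥) [Finite ι] [Fintype κ]
    (Φ : Matrix ι κ A) :
    Module.Flat (R ⧸ J) ((R ⧸ J) ⊗[R] ((ι → A) ⧸ LinearMap.range Φ.mulVecLin)) ↔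
      {ζbar : κ → A ⧸ 𝔪.map (algebraMap R A) |
          ∃ ζ : κ → A, (∀ i, (Φ *ᵥ ζ) i ∈ J.map (algebraMap R A)) ∧
            (fun j ↦ Ideal.Quotient.mk (𝔪.map (algebraMap R A)) (ζ j)) = ζbar} =
      {ζbar | Φ.map (Ideal.Quotient.mk (𝔪.map (algebraMap R A))) *ᵥ ζbar = 0} := by
  have := Fintype.ofFinite ι
  have : Module.Flat R (ι → A) :=
    .of_linearEquiv (DirectSum.linearEquivFunOnFintype R ι fun _ ↦ A).symm
  rw [flat_quotient_tensor_coker_iff hJ h𝔪A, image_ker_eq_ker_map_iff]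

/-- Lemma 3.2: with `R` Noetherian local, `J ⊆ 𝔪`, `A` a Noetherian local flat
`R`-algebra with `𝔪A` contained in the maximal ideal of `A`, and `F = coker Φ` for a
matrix `Φ` over `A`: `F ⊗_R R/J` is flat over `R/J` iff the image of
`ker_J Φ = Φ⁻¹(J·A^q)` in `(A/𝔪A)^p` equals the kernel of the reduced map `Φ_𝔪`. -/
theorem stmt3 {R : Type*} [CommRing R] [IsNoetherianRing R] [IsLocalRing R]
    (J : Ideal R) (hJ : J ≤ maximalIdeal R)
    {A : Type*} [CommRing A] [IsNoetherianRing A] [IsLocalRing A] [Algebra R A]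
    [Module.Flat R A]
    (hloc : Ideal.map (algebraMap R A) (maximalIdeal R) ≤ maximalIdeal A)
    {p q : ℕ} (Φ : Matrix (Fin q) (Fin p) A) :
    Module.Flat (R ⧸ J)
        ((R ⧸ J) ⊗[R] ((Fin q → A) ⧸ LinearMap.range Φ.mulVecLin)) ↔
      {ζbar : Fin p → A ⧸ Ideal.map (algebraMap R A) (maximalIdeal R) |
          ∃ ζ : Fin p → A, (∀ i, Φ.mulVec ζ i ∈ Ideal.map (algebraMap R A) J) ∧
            (fun i => Ideal.Quotient.mk (Ideal.map (algebraMap R A) (maximalIdeal R)) (ζ i))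
              = ζbar} =
      {ζbar | (Φ.map (Ideal.Quotient.mk (Ideal.map (algebraMap R A) (maximalIdeal R)))).mulVec
          ζbar = 0} := by
  exact stmt3_general J (maximalIdeal R) hJ (hloc.trans (maximalIdeal_le_jacobson _)) Φ
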